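/- arXiv:1011.1902 — 6 statements merged into one kernel-verified Lean document; each statement's English description precedes it below -/
import Mathlib

section
/- Let p be an odd prime and let k be an integer with 1 ≤ k ≤ (p-1)/2. Then (1/p)·C(2(p−k), p−k) ≡ −2/(k·C(2k,k)) (mod p), as a congruence of rational numbers with p-integral denominators; in particular p divides C(2(p−k), p−k). -/
/-!
Write `a k = k · C(2k,k) · C(2(p-k),p-k)`. The theorem is equivalent to `a k ≡ -2p (mod p²)`,
because `k · C(2k,k)` is prime to `p` when `0 < 2k < p`.

The recurrence `(n+1) C(2n+2,n+1) = 2(2n+1) C(2n,n)`, used at `n = k` and at `n = p-k-1`, gives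
`k (2p-2k-1) a (k+1) = (2k+1)(p-k) a k`. Both coefficients are `-k(2k+1)` modulo `p`, a unit, so
once `p` divides `a k` it divides `a (k+1)`, and then the two agree modulo `p²`. The value at
`k = 1` comes from `p · C(2p,p) = 2(2p-1) C(2p-2,p-1)` and Lucas' congruence `C(2p,p) ≡ 2 (mod p)`.
-/

/-- If `x a' = y a` where `x ≡ y ≡ -u (mod p)` with `u` prime to `p`, and `a ≡ -2p (mod p²)`, then
`a' ≡ -2p (mod p²)`. -/
lemma sq_dvd_transfer {p a a' u r s : ℤ} (hp : Prime p) (hu : ¬ p ∣ u)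
    (h : (p * r - u) * a' = (p * s - u) * a) (ha : p ^ 2 ∣ a + 2 * p) :
    p ^ 2 ∣ a' + 2 * p := by
  obtain ⟨t, ht⟩ := ha
  have hpa' : p ∣ a' := by
    have h1 : p ∣ u * a' :=
      ⟨r * a' - (p * s - u) * (p * t - 2), by linear_combination -h - (p * s - u) * ht⟩
    exact (hp.dvd_or_dvd h1).resolve_left hu
  obtain ⟨b, rfl⟩ := hpa'
  have hcop : IsCoprime (p ^ 2) u := ((hp.coprime_iff_not_dvd).2 hu).pow_left
  refine hcop.dvd_of_dvd_mul_left ⟨r * b - s * (p * t - 2) + u * t, ?_⟩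
  linear_combination -h - (p * s - u) * ht

lemma not_dvd_centralBinom {p k : ℕ} (hp : p.Prime) (hk : 2 * k < p) :
    ¬ p ∣ k.centralBinom := by
  intro h
  have h1 : p ∣ (2 * k).factorial := by
    rw [Nat.centralBinom_eq_two_mul_choose] at h
    rw [← Nat.choose_mul_factorial_mul_factorial (show k ≤ 2 * k by omega), mul_assoc]
    exact h.mul_right _
  have := (hp.dvd_factorial).1 h1
  omega

/-- The congruence for `k = 1`, where `C(2,1) = 2`. -/
lemma sq_dvd_base {p : ℕ} (hp : p.Prime) :
    (p : ℤ) ^ 2 ∣ 2 * ((p - 1).centralBinom : ℤ) + 2 * p := by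
  have hpZ : Prime (p : ℤ) := Nat.prime_iff_prime_int.1 hp
  have := Fact.mk hp
  obtain ⟨m, rfl⟩ : ∃ m, p = m + 1 := ⟨p - 1, by have := hp.pos; omega⟩
  have hrec := Nat.succ_mul_centralBinom_succ m
  have hluc : Nat.choose (2 * (m + 1)) (m + 1) ≡ 2 [MOD (m + 1)] := by
    have h := Choose.choose_modEq_choose_mod_mul_choose_div_nat
      (n := 2 * (m + 1)) (k := m + 1) (p := m + 1)
    simpa using h
  rw [← Nat.centralBinom_eq_two_mul_choose] at hluc
  obtain ⟨t, ht⟩ := (Nat.modEq_iff_dvd.1 hluc.symm)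
  zify at hrec
  simp only [Nat.add_sub_cancel]
  push_cast at *
  refine sq_dvd_transfer (u := 1) (r := 2) (s := 0)
    (a := -((m + 1) * ((m + 1).centralBinom : ℤ))) hpZ hpZ.not_dvd_one ?_ ?_
  · linear_combination -hrec
  · exact ⟨-t, by linear_combination -((m : ℤ) + 1) * ht⟩

lemma sq_dvd_all {p : ℕ} (hp : p.Prime) (k : ℕ) (hk1 : 1 ≤ k)
    (hk : 2 * k < p) :
    (p : ℤ) ^ 2 ∣ k * (k.centralBinom : ℤ) * ((p - k).centralBinom : ℤ) + 2 * p := by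
  have hpZ : Prime (p : ℤ) := Nat.prime_iff_prime_int.1 hp
  induction k, hk1 using Nat.le_induction with
  | base => simpa [Nat.centralBinom] using sq_dvd_base hp
  | succ k hk1 ih =>
    obtain ⟨m, rfl⟩ : ∃ m, p = k + 1 + m := ⟨p - (k + 1), by omega⟩
    have ih := ih (by omega)
    rw [show k + 1 + m - k = m + 1 by omega] at ih
    rw [show k + 1 + m - (k + 1) = m by omega]
    have hreck := Nat.succ_mul_centralBinom_succ k
    have hrecm := Nat.succ_mul_centralBinom_succ m
    zify at hreck hrecm
    have hu : ¬ ((k + 1 + m : ℕ) : ℤ) ∣ ((k * (2 * k + 1) : ℕ) : ℤ) := by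
      rw [Int.natCast_dvd_natCast, hp.dvd_mul, not_or]
      exact ⟨Nat.not_dvd_of_pos_of_lt (by omega) (by omega),
        Nat.not_dvd_of_pos_of_lt (by omega) (by omega)⟩
    refine sq_dvd_transfer (r := 2 * k) (s := 2 * k + 1) hpZ hu ?_ ih
    push_cast
    linear_combination (k : ℤ) * (2 * m + 1) * (m.centralBinom : ℤ) * hreck
      - (2 * k + 1) * (k : ℤ) * (k.centralBinom : ℤ) * hrecm

/-- For an odd prime `p` and `1 ≤ k ≤ (p-1)/2`,
`(1/p)·C(2(p-k), p-k) ≡ -2/(k·C(2k,k)) (mod p)`; in particular `p ∣ C(2(p-k), p-k)`. -/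
theorem central_binom_reflection_cong (p k : ℕ) (hp : p.Prime) (hodd : Odd p)
    (hk1 : 1 ≤ k) (hk2 : k ≤ (p - 1) / 2) :
    padicNorm p ((1 / (p : ℚ)) * (Nat.choose (2 * (p - k)) (p - k) : ℚ) -
      (-2 / ((k : ℚ) * (Nat.choose (2 * k) k : ℚ)))) ≤ (p : ℚ) ^ (-1 : ℤ) ∧
    p ∣ Nat.choose (2 * (p - k)) (p - k) := by
  have hp2 := hp.two_le
  have hk : 2 * k < p := by omega
  have := Fact.mk hp
  obtain ⟨t, ht⟩ := sq_dvd_all hp k hk1 hk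
  have hD : ¬ p ∣ k * k.centralBinom := by
    rw [hp.dvd_mul, not_or]
    exact ⟨Nat.not_dvd_of_pos_of_lt (by omega) (by omega), not_dvd_centralBinom hp hk⟩
  rw [← Nat.centralBinom_eq_two_mul_choose, ← Nat.centralBinom_eq_two_mul_choose]
  have hdvd : p ∣ (p - k).centralBinom := by
    have h1 : (p : ℤ) ∣ ((k * k.centralBinom * (p - k).centralBinom : ℕ) : ℤ) :=
      ⟨p * t - 2, by push_cast; linear_combination ht⟩
    exact ((hp.dvd_mul).1 (Int.natCast_dvd_natCast.1 h1)).resolve_left hD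
  refine ⟨?_, hdvd⟩
  obtain ⟨c, hc⟩ := hdvd
  rw [hc] at ht ⊢
  have hp0 : (p : ℤ) ≠ 0 := by exact_mod_cast hp.ne_zero
  have hp0' : (p : ℚ) ≠ 0 := by exact_mod_cast hp.ne_zero
  have hk0 : (k : ℚ) ≠ 0 := by exact_mod_cast (by omega : k ≠ 0)
  have hB0 : (k.centralBinom : ℚ) ≠ 0 := by exact_mod_cast k.centralBinom_ne_zero
  have hz : (k * k.centralBinom * c + 2 : ℤ) = p * t := by
    apply mul_left_cancel₀ hp0
    push_cast at ht
    linear_combination ht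
  have heq : (1 / (p : ℚ)) * ((p * c : ℕ) : ℚ) - (-2 / ((k : ℚ) * (k.centralBinom : ℚ)))
      = ((k * k.centralBinom * c + 2 : ℤ) : ℚ) / ((k * k.centralBinom : ℕ) : ℚ) := by
    push_cast
    field_simp
    ring
  rw [heq, padicNorm.div, (padicNorm.nat_eq_one_iff _).2 hD, div_one]
  have := (padicNorm.dvd_iff_norm_le (p := p) (n := 1) (z := k * k.centralBinom * c + 2)).1
    (by rw [hz]; exact ⟨t, by push_cast; ring⟩)
  simpa using this
end

section
/- Let p be an odd prime, set m = (p-1)/2, and let k be an integer with 1 ≤ k ≤ m. Then (1/p)·C(2m+2k, m+k) ≡ (-1)^((p-1)/2) · 4^(2k)/(2k·C(2k,k)) (mod p), as a congruence of rational numbers with p-integral denominators; in particular p divides C(2m+2k, m+k). -/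
/-!
Write `c n = C(2n, n)`. The recurrence `(n + 1) c (n + 1) = 2 (2n + 1) c n`, with `2m + 1 = p`,
controls both sides of the congruence. At `n = m` it gives `(m + 1) c (m + 1) = 2 p c m`, so the
factor `p` enters at `k = 1`, and `c m = C(p - 1, m) ≡ (-1)^m` fixes the value of the quotient
there. For larger `k`, writing `c (m + k) = p q_k`, the recurrence reads
`(2k + 1) q_(k+1) ≡ 8 k q_k (mod p)`; combined with the recurrence for `c k`, it shows that
`2 k q_k c k` is multiplied by `16` modulo `p` when `k` increases by one. Induction therefore gives
the denominator-free congruence `2 k q_k c k ≡ (-1)^m 16^k (mod p)` (`exists_quotient_cong`),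
and `2 k c k` is a `p`-adic unit because `2k < p`.
-/

/-- `C(p - 1, j) ≡ (-1)^j (mod p)`: consecutive terms are opposite, since they add up to
`C(p, j + 1)`. -/
lemma choose_prime_pred_cast (p j : ℕ) (hp : p.Prime) (hj : j < p) :
    ((p - 1).choose j : ZMod p) = (-1) ^ j := by
  induction j with
  | zero => simp
  | succ j ih =>
    have h := Nat.choose_succ_succ (p - 1) j
    rw [Nat.succ_eq_add_one, Nat.sub_add_cancel hp.one_le] at h
    have h0 : ((p.choose (j + 1) : ℕ) : ZMod p) = 0 :=
      (ZMod.natCast_eq_zero_iff _ _).2 (hp.dvd_choose_self (by omega) hj)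
    rw [h, Nat.cast_add, ih (by omega)] at h0
    rw [pow_succ]
    linear_combination h0

/-- The denominator-free form of the congruence, with `q = C(2m + 2k, m + k) / p`. -/
lemma exists_quotient_cong (p m k : ℕ) (hp : p.Prime) (hpm : p = 2 * m + 1)
    (hk1 : 1 ≤ k) (hk2 : k ≤ m) :
    ∃ q : ℕ, Nat.centralBinom (m + k) = p * q ∧
      (q : ZMod p) * (2 * k * Nat.centralBinom k) = (-1) ^ m * 16 ^ k := by
  have hp0 : (2 * m + 1 : ZMod p) = 0 := by
    have := ZMod.natCast_self p
    rw [hpm] at this ⊢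
    exact_mod_cast this
  induction k, hk1 using Nat.le_induction with
  | base =>
    have hrec := Nat.succ_mul_centralBinom_succ m
    rw [← hpm] at hrec
    have hcop : p.Coprime (m + 1) :=
      hp.coprime_iff_not_dvd.2 (Nat.not_dvd_of_pos_of_lt (by omega) (by omega))
    obtain ⟨q, hq⟩ : p ∣ Nat.centralBinom (m + 1) :=
      hcop.dvd_of_dvd_mul_left ⟨2 * Nat.centralBinom m, by rw [hrec]; ring⟩
    refine ⟨q, hq, ?_⟩
    have hq' : (m + 1) * q = 2 * Nat.centralBinom m := by
      apply Nat.eq_of_mul_eq_mul_left hp.pos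
      rw [hq] at hrec
      linarith
    have hc : (Nat.centralBinom m : ZMod p) = (-1) ^ m := by
      have := choose_prime_pred_cast p m hp (by omega)
      rwa [show p - 1 = 2 * m by omega] at this
    have hz : ((m : ZMod p) + 1) * q = 2 * (-1) ^ m := by
      rw [← hc]
      exact_mod_cast congrArg (Nat.cast : ℕ → ZMod p) hq'
    have h1 : Nat.centralBinom 1 = 2 := by decide
    rw [h1]
    push_cast
    linear_combination 8 * hz - 4 * q * hp0
  | succ k hk ih =>
    obtain ⟨q, hq, hcong⟩ := ih (by omega)
    have hrec := Nat.succ_mul_centralBinom_succ (m + k)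
    have hcop : p.Coprime (m + k + 1) :=
      hp.coprime_iff_not_dvd.2 (Nat.not_dvd_of_pos_of_lt (by omega) (by omega))
    obtain ⟨r, hr⟩ : p ∣ Nat.centralBinom (m + k + 1) :=
      hcop.dvd_of_dvd_mul_left ⟨2 * (2 * (m + k) + 1) * q, by rw [hrec, hq]; ring⟩
    refine ⟨r, hr, ?_⟩
    have hr' : (m + k + 1) * r = 2 * (2 * (m + k) + 1) * q := by
      apply Nat.eq_of_mul_eq_mul_left hp.pos
      rw [hr, hq] at hrec
      linarith
    have hz : ((m : ZMod p) + k + 1) * r = 2 * (2 * (m + k) + 1) * q := by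
      exact_mod_cast congrArg (Nat.cast : ℕ → ZMod p) hr'
    have hck : ((k : ZMod p) + 1) * Nat.centralBinom (k + 1)
        = 2 * (2 * k + 1) * Nat.centralBinom k := by
      exact_mod_cast congrArg (Nat.cast : ℕ → ZMod p) (Nat.succ_mul_centralBinom_succ k)
    push_cast
    rw [pow_succ]
    linear_combination 2 * r * hck + 8 * Nat.centralBinom k * hz + 16 * hcong
      + (16 * q - 4 * r) * Nat.centralBinom k * hp0

/-- For an odd prime `p`, `m = (p-1)/2`, and `1 ≤ k ≤ m`,
`(1/p)·C(2m+2k, m+k) ≡ (-1)^((p-1)/2)·4^(2k)/(2k·C(2k,k)) (mod p)`;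
in particular `p ∣ C(2m+2k, m+k)`. -/
theorem central_binom_mplusk_cong (p m k : ℕ) (hp : p.Prime) (hodd : Odd p)
    (hm : m = (p - 1) / 2) (hk1 : 1 ≤ k) (hk2 : k ≤ m) :
    padicNorm p ((1 / (p : ℚ)) * (Nat.choose (2 * m + 2 * k) (m + k) : ℚ) -
      (-1) ^ ((p - 1) / 2) * (4 : ℚ) ^ (2 * k) /
        (2 * (k : ℚ) * (Nat.choose (2 * k) k : ℚ))) ≤ (p : ℚ) ^ (-1 : ℤ) ∧
    p ∣ Nat.choose (2 * m + 2 * k) (m + k) := by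
  have : Fact p.Prime := ⟨hp⟩
  have hpm : p = 2 * m + 1 := by
    obtain ⟨t, ht⟩ := hodd
    omega
  obtain ⟨q, hq, hcong⟩ := exists_quotient_cong p m k hp hpm hk1 hk2
  rw [Nat.centralBinom, mul_add] at hq
  refine ⟨?_, q, hq⟩
  rw [hq, ← hm]
  have hunit : ¬ p ∣ 2 * k * (2 * k).choose k := by
    rw [hp.dvd_mul, not_or]
    refine ⟨Nat.not_dvd_of_pos_of_lt (by omega) (by omega), fun h => ?_⟩
    -- `C(2k, k)` divides `(2k)!`, whose prime factors are at most `2k < p`.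
    have hfac := h.mul_right (k.factorial * k.factorial)
    rw [← mul_assoc] at hfac
    have hmul := Nat.choose_mul_factorial_mul_factorial (show k ≤ 2 * k by omega)
    rw [show 2 * k - k = k by omega] at hmul
    rw [hmul, hp.dvd_factorial] at hfac
    omega
  have hpQ : (p : ℚ) ≠ 0 := by exact_mod_cast hp.ne_zero
  have hdQ : ((2 * k * (2 * k).choose k : ℕ) : ℚ) ≠ 0 := by
    rw [Nat.cast_ne_zero]
    rintro h
    exact hunit (h ▸ dvd_zero p)
  have hnum : (p : ℤ) ∣ (q : ℤ) * (2 * k * (2 * k).choose k) - (-1) ^ m * 16 ^ k := by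
    rw [← ZMod.intCast_zmod_eq_zero_iff_dvd]
    push_cast
    rw [sub_eq_zero]
    exact hcong
  have hnorm := (padicNorm.dvd_iff_norm_le (p := p) (n := 1)).1 (by simpa using hnum)
  have heq : (1 / (p : ℚ)) * ((p * q : ℕ) : ℚ) -
      (-1) ^ m * (4 : ℚ) ^ (2 * k) / (2 * (k : ℚ) * ((2 * k).choose k : ℚ))
      = (((q : ℤ) * (2 * k * (2 * k).choose k) - (-1) ^ m * 16 ^ k : ℤ) : ℚ)
        / ((2 * k * (2 * k).choose k : ℕ) : ℚ) := by
    rw [eq_div_iff hdQ, pow_mul]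
    push_cast at hdQ ⊢
    rw [sub_mul, div_mul_cancel₀ _ hdQ]
    rw [one_div, inv_mul_cancel_left₀ hpQ]
    norm_num
  rw [heq, padicNorm.div, (padicNorm.nat_eq_one_iff (p := p) _).2 hunit, div_one]
  simpa using hnorm
end

section
/- Let p be an odd prime and k an integer with 1 ≤ k ≤ (p-1)/2. Then C((p-1)/2 + k, 2k) ≡ C(2k,k)/(-16)^k (mod p^2), as a congruence of rational numbers with p-integral denominators. -/
/-!
Write `p = 2n + 1`. Pairing the factors `n + j + 1` and `n - j` of the falling factorial gives
`C(n+k, 2k) (2k)! 4^k = ∏_{j<k} (p² - (2j+1)²)` (`choose_mul_eq_prod`), while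
`C(2k, k) (2k)! 4^k = 16^k ∏_{j<k} (2j+1)²` (`centralBinom_mul_eq_prod`). Hence `(2k)! 4^k` times
the difference in the theorem is `∏ (p² - (2j+1)²) - ∏ (-(2j+1)²)`, which is divisible by `p²`;
and `(2k)! 4^k` is a `p`-adic unit because `2k < p` and `p` is odd.
-/

lemma choose_mul_eq_prod (n k : ℕ) (hk : k ≤ n) :
    ((n + k).choose (2 * k) : ℤ) * (2 * k).factorial * 4 ^ k =
      ∏ j ∈ Finset.range k, ((2 * n + 1 : ℤ) ^ 2 - (2 * j + 1) ^ 2) := by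
  have key : ∀ m : ℕ, m ≤ n → ((n + m).descFactorial (2 * m) : ℤ) * 4 ^ m =
      ∏ j ∈ Finset.range m, ((2 * n + 1 : ℤ) ^ 2 - (2 * j + 1) ^ 2) := by
    intro m
    induction m with
    | zero => simp
    | succ m ih =>
      intro hm
      rw [Finset.prod_range_succ, ← ih (by omega)]
      have h : (n + (m + 1)).descFactorial (2 * (m + 1)) =
          (n + m + 1) * ((n - m) * (n + m).descFactorial (2 * m)) := by
        rw [show n + (m + 1) = (n + m) + 1 by ring, show 2 * (m + 1) = (2 * m + 1) + 1 by ring,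
          Nat.succ_descFactorial_succ, Nat.descFactorial_succ,
          show n + m - 2 * m = n - m by omega]
      rw [h]
      push_cast [Nat.cast_sub (show m ≤ n by omega)]
      ring
  rw [← key k hk, Nat.descFactorial_eq_factorial_mul_choose]
  push_cast
  ring

lemma centralBinom_mul_eq_prod (k : ℕ) :
    (k.centralBinom : ℤ) * (2 * k).factorial * 4 ^ k =
      16 ^ k * ∏ j ∈ Finset.range k, (2 * j + 1 : ℤ) ^ 2 := by
  induction k with
  | zero => simp
  | succ k ih =>
    have h : ((k : ℤ) + 1) * (k + 1).centralBinom = 2 * (2 * k + 1) * k.centralBinom := by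
      exact_mod_cast Nat.succ_mul_centralBinom_succ k
    rw [Finset.prod_range_succ, show 2 * (k + 1) = (2 * k + 1) + 1 by ring,
      Nat.factorial_succ, Nat.factorial_succ]
    push_cast
    linear_combination (8 * (2 * k + 1) * (2 * k).factorial * 4 ^ k : ℤ) * h +
      (16 * (2 * k + 1) ^ 2 : ℤ) * ih

/-- For an odd prime `p` and `1 ≤ k ≤ (p-1)/2`,
`C((p-1)/2 + k, 2k) ≡ C(2k,k)/(-16)^k (mod p^2)`. -/
theorem choose_half_plus_k_cong (p k : ℕ) (hp : p.Prime) (hodd : Odd p)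
    (hk1 : 1 ≤ k) (hk2 : k ≤ (p - 1) / 2) :
    padicNorm p ((Nat.choose ((p - 1) / 2 + k) (2 * k) : ℚ) -
      (Nat.choose (2 * k) k : ℚ) / (-16 : ℚ) ^ k) ≤ (p : ℚ) ^ (-2 : ℤ) := by
  haveI : Fact p.Prime := ⟨hp⟩
  obtain ⟨n, rfl⟩ := hodd
  have hn : (2 * n + 1 - 1) / 2 = n := by omega
  rw [hn] at hk2 ⊢
  have hA := choose_mul_eq_prod n k hk2
  have hB := centralBinom_mul_eq_prod k
  rw [Nat.centralBinom_eq_two_mul_choose] at hB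
  have hdvd : (((2 * n + 1) ^ 2 : ℕ) : ℤ) ∣
      ∏ j ∈ Finset.range k, ((2 * n + 1 : ℤ) ^ 2 - (2 * j + 1) ^ 2) -
        (-1) ^ k * ∏ j ∈ Finset.range k, (2 * j + 1 : ℤ) ^ 2 := by
    have hneg : (-1 : ℤ) ^ k * ∏ j ∈ Finset.range k, (2 * j + 1 : ℤ) ^ 2 =
        ∏ j ∈ Finset.range k, (-(2 * j + 1 : ℤ) ^ 2) := by
      rw [Finset.prod_neg, Finset.card_range]
    rw [hneg]
    apply Int.ModEq.dvd
    apply Int.ModEq.prod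
    intro j _
    apply Int.modEq_of_dvd
    exact ⟨1, by push_cast; ring⟩
  have hunit : padicNorm (2 * n + 1) (((2 * k).factorial * 4 ^ k : ℕ) : ℚ) = 1 := by
    rw [padicNorm.nat_eq_one_iff]
    intro h
    rcases hp.dvd_mul.1 h with h | h
    · have := hp.dvd_factorial.1 h
      omega
    · have h2 : 2 * n + 1 ∣ 2 ^ 2 := hp.dvd_of_dvd_pow h
      have := Nat.le_of_dvd (by norm_num) (hp.dvd_of_dvd_pow h2)
      omega
  have hle := (padicNorm.dvd_iff_norm_le (p := 2 * n + 1)).1 hdvd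
  rw [← one_mul (padicNorm _ _), ← hunit, ← padicNorm.mul]
  refine le_of_eq_of_le (congrArg _ ?_) hle
  have hA' := congrArg (Int.cast : ℤ → ℚ) hA
  have hB' := congrArg (Int.cast : ℤ → ℚ) hB
  push_cast at hA' hB' ⊢
  rw [← hA']
  have h16 : (-16 : ℚ) ^ k = (-1) ^ k * 16 ^ k := by rw [← mul_pow]; norm_num
  have hsq : ((-1 : ℚ) ^ k) * (-1) ^ k = 1 := by rw [← mul_pow]; norm_num
  have h1 : ((2 * k).choose k : ℚ) / (-16) ^ k * ((2 * k).factorial * 4 ^ k) =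
      (-1) ^ k * ∏ j ∈ Finset.range k, (2 * j + 1 : ℚ) ^ 2 := by
    rw [div_mul_eq_mul_div, div_eq_iff (by positivity), h16]
    linear_combination hB' -
      (16 ^ k * ∏ j ∈ Finset.range k, (2 * j + 1 : ℚ) ^ 2) * hsq
  linear_combination -h1
end

section
/- For all nonnegative integers n and all positive integers k, the rational functions F(n,k) = (-1)^(n+k)·(20n−2k+3)·C(2n,n)·C(4n+2k, 2n+k)·C(2n+k, 2k)·C(2n−k, n)/(4^(5n−k)·C(2k,k)) and G(n,k) = (-1)^(n+k)·n·C(2n−1, n−1)·C(4n+2k−2, 2n+k−1)·C(2n+k−1, 2k)·C(2n−k−1, n−1)/(4^(5n−4−k)·C(2k,k)) satisfy the WZ relation F(n, k−1) − F(n,k) = G(n+1, k) − G(n,k). -/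
/-!
Writing every binomial coefficient through factorials, `F(n,k)` and `G(n,k)` are, for `k ≤ n`,
hypergeometric terms with denominator `(n-k)!` (`wzF2_closed`, `wzG2_closed`), and both vanish for
`n < k` (`wzF2_eq_zero`, `wzG2_eq_zero`). For `k ≤ n` all four terms of the relation are
rational multiples of one common factorial product, so the relation reduces to a polynomial
identity. For `k = n + 1` only `F(n,n)` and `G(n+1,n+1)` survive and they agree; for `k > n + 1`
everything is zero.
-/

/-- The WZ pair for Theorem 1.2:
`F(n,k) = (-1)^(n+k)·(20n-2k+3)·C(2n,n)·C(4n+2k,2n+k)·C(2n+k,2k)·C(2n-k,n)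
           /(4^(5n-k)·C(2k,k))`.
(Binomial coefficients vanish out of range.) -/
noncomputable def wzF2 (n k : ℕ) : ℚ :=
  (-1) ^ (n + k) * (20 * (n : ℚ) - 2 * (k : ℚ) + 3) * (Nat.choose (2 * n) n : ℚ) *
      (Nat.choose (4 * n + 2 * k) (2 * n + k) : ℚ) * (Nat.choose (2 * n + k) (2 * k) : ℚ) *
      (Nat.choose (2 * n - k) n : ℚ) /
    ((4 : ℚ) ^ (5 * (n : ℤ) - (k : ℤ)) * (Nat.choose (2 * k) k : ℚ))

/-- `G(n,k) = (-1)^(n+k)·n·C(2n-1,n-1)·C(4n+2k-2,2n+k-1)·C(2n+k-1,2k)·C(2n-k-1,n-1)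
              /(4^(5n-4-k)·C(2k,k))`. -/
noncomputable def wzG2 (n k : ℕ) : ℚ :=
  (-1) ^ (n + k) * (n : ℚ) * (Nat.choose (2 * n - 1) (n - 1) : ℚ) *
      (Nat.choose (4 * n + 2 * k - 2) (2 * n + k - 1) : ℚ) *
      (Nat.choose (2 * n + k - 1) (2 * k) : ℚ) *
      (Nat.choose (2 * n - k - 1) (n - 1) : ℚ) /
    ((4 : ℚ) ^ (5 * (n : ℤ) - 4 - (k : ℤ)) * (Nat.choose (2 * k) k : ℚ))

open Nat in
/-- `F(n,k)` at `n = k + m`; here `5n - k = 4k + 5m`. -/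
lemma wzF2_closed (m k : ℕ) :
    wzF2 (k + m) k = (-1) ^ m * (20 * ((k : ℚ) + m) - 2 * k + 3) * (2 * k + 2 * m)! *
      (6 * k + 4 * m)! * (k ! : ℚ) ^ 2 /
      (((k + m)! : ℚ) ^ 3 * (3 * k + 2 * m)! * ((2 * k)! : ℚ) ^ 2 * m ! * 4 ^ (4 * k + 5 * m)) := by
  have e : (5 * ((k + m : ℕ) : ℤ) - (k : ℤ)) = ((4 * k + 5 * m : ℕ) : ℤ) := by push_cast; ring
  have s : (-1 : ℚ) ^ (k + m + k) = (-1) ^ m := by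
    rw [show k + m + k = 2 * k + m by ring, pow_add, pow_mul]; simp
  have h1 : 2 * (k + m) = (k + m) + (k + m) := by ring
  have h2 : 4 * (k + m) + 2 * k = (3 * k + 2 * m) + (3 * k + 2 * m) := by ring
  have h3 : 2 * (k + m) + k = 2 * k + (k + 2 * m) := by ring
  have h3' : 2 * k + (k + 2 * m) = 3 * k + 2 * m := by ring
  have h4 : 2 * (k + m) - k = (k + m) + m := by omega
  have h4' : k + m + m = k + 2 * m := by ring
  have h5 : 2 * k = k + k := by ring
  have c1 : ((2 * (k + m)).choose (k + m) : ℚ) = (2 * k + 2 * m)! / ((k + m)! * (k + m)!) := by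
    rw [h1, Nat.cast_add_choose, ← h1, mul_add]
  have c2 : ((4 * (k + m) + 2 * k).choose (2 * (k + m) + k) : ℚ) =
      (6 * k + 4 * m)! / ((3 * k + 2 * m)! * (3 * k + 2 * m)!) := by
    rw [h2, h3, h3', Nat.cast_add_choose, ← h2, show 4 * (k + m) + 2 * k = 6 * k + 4 * m by ring]
  have c3 : ((2 * (k + m) + k).choose (2 * k) : ℚ) =
      (3 * k + 2 * m)! / ((2 * k)! * (k + 2 * m)!) := by
    rw [h3, Nat.cast_add_choose, h3']
  have c4 : ((2 * (k + m) - k).choose (k + m) : ℚ) = (k + 2 * m)! / ((k + m)! * m !) := by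
    rw [h4, Nat.cast_add_choose, h4']
  have c5 : ((2 * k).choose k : ℚ) = (2 * k)! / (k ! * k !) := by
    rw [h5, Nat.cast_add_choose]
  have f (a : ℕ) : (a ! : ℚ) ≠ 0 := by exact_mod_cast a.factorial_ne_zero
  unfold wzF2
  rw [e, zpow_natCast, s, c1, c2, c3, c4, c5]
  have := f (k + m); have := f (3 * k + 2 * m); have := f (2 * k); have := f (k + 2 * m)
  have := f m; have := f k
  push_cast
  field_simp

open Nat in
/-- `G(n,k)` at `n = k + m`, with `k = j + 1`; here `5n - 4 - k = 4j + 5m`. -/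
lemma wzG2_closed (m j : ℕ) :
    wzG2 (j + 1 + m) (j + 1) = (-1) ^ m * ((j : ℚ) + 1 + m) * (2 * j + 2 * m + 1)! *
      (6 * j + 4 * m + 4)! * ((j + 1)! : ℚ) ^ 2 /
      (((j + m)! : ℚ) ^ 2 * (j + m + 1)! * (3 * j + 2 * m + 2)! * ((2 * j + 2)! : ℚ) ^ 2 * m ! *
        4 ^ (4 * j + 5 * m)) := by
  have e : (5 * ((j + 1 + m : ℕ) : ℤ) - 4 - ((j + 1 : ℕ) : ℤ)) = ((4 * j + 5 * m : ℕ) : ℤ) := by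
    push_cast; ring
  have s : (-1 : ℚ) ^ (j + 1 + m + (j + 1)) = (-1) ^ m := by
    rw [show j + 1 + m + (j + 1) = 2 * (j + 1) + m by ring, pow_add, pow_mul]; simp
  have c1 : ((2 * (j + 1 + m) - 1).choose (j + 1 + m - 1) : ℚ) =
      (2 * j + 2 * m + 1)! / ((j + m)! * (j + m + 1)!) := by
    rw [show 2 * (j + 1 + m) - 1 = (j + m) + (j + m + 1) by omega,
      show j + 1 + m - 1 = j + m by omega, Nat.cast_add_choose,
      show (j + m) + (j + m + 1) = 2 * j + 2 * m + 1 by ring]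
  have c2 : ((4 * (j + 1 + m) + 2 * (j + 1) - 2).choose (2 * (j + 1 + m) + (j + 1) - 1) : ℚ) =
      (6 * j + 4 * m + 4)! / ((3 * j + 2 * m + 2)! * (3 * j + 2 * m + 2)!) := by
    rw [show 4 * (j + 1 + m) + 2 * (j + 1) - 2 = (3 * j + 2 * m + 2) + (3 * j + 2 * m + 2) by omega,
      show 2 * (j + 1 + m) + (j + 1) - 1 = 3 * j + 2 * m + 2 by omega, Nat.cast_add_choose,
      show (3 * j + 2 * m + 2) + (3 * j + 2 * m + 2) = 6 * j + 4 * m + 4 by ring]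
  have c3 : ((2 * (j + 1 + m) + (j + 1) - 1).choose (2 * (j + 1)) : ℚ) =
      (3 * j + 2 * m + 2)! / ((2 * j + 2)! * (j + 2 * m)!) := by
    rw [show 2 * (j + 1 + m) + (j + 1) - 1 = (2 * j + 2) + (j + 2 * m) by omega,
      show 2 * (j + 1) = 2 * j + 2 by ring, Nat.cast_add_choose,
      show (2 * j + 2) + (j + 2 * m) = 3 * j + 2 * m + 2 by ring]
  have c4 : ((2 * (j + 1 + m) - (j + 1) - 1).choose (j + 1 + m - 1) : ℚ) =
      (j + 2 * m)! / ((j + m)! * m !) := by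
    rw [show 2 * (j + 1 + m) - (j + 1) - 1 = (j + m) + m by omega,
      show j + 1 + m - 1 = j + m by omega, Nat.cast_add_choose,
      show (j + m) + m = j + 2 * m by ring]
  have c5 : ((2 * (j + 1)).choose (j + 1) : ℚ) = (2 * j + 2)! / ((j + 1)! * (j + 1)!) := by
    rw [show 2 * (j + 1) = (j + 1) + (j + 1) by ring, Nat.cast_add_choose,
      show (j + 1) + (j + 1) = 2 * j + 2 by ring]
  have f (a : ℕ) : (a ! : ℚ) ≠ 0 := by exact_mod_cast a.factorial_ne_zero
  unfold wzG2
  rw [e, zpow_natCast, s, c1, c2, c3, c4, c5]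
  have := f (j + m); have := f (j + m + 1); have := f (3 * j + 2 * m + 2)
  have := f (2 * j + 2); have := f (j + 2 * m); have := f m; have := f (j + 1)
  push_cast
  field_simp

lemma wzF2_eq_zero {n k : ℕ} (h : n < k) : wzF2 n k = 0 := by
  unfold wzF2
  rcases Nat.eq_zero_or_pos n with rfl | hn
  -- For `n = 0` the last binomial is `C(0,0) = 1`; the vanishing factor is `C(k,2k)`.
  · rw [Nat.choose_eq_zero_of_lt (show 2 * 0 + k < 2 * k by omega)]; simp
  · rw [Nat.choose_eq_zero_of_lt (show 2 * n - k < n by omega)]; simp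

lemma wzG2_eq_zero {n k : ℕ} (h : n < k) : wzG2 n k = 0 := by
  unfold wzG2
  rcases Nat.lt_or_ge n 2 with hn | hn
  -- For `n ≤ 1` the last binomial is `C(0,0) = 1`, as the subtractions truncate.
  · rw [Nat.choose_eq_zero_of_lt (show 2 * n + k - 1 < 2 * k by omega)]; simp
  · rw [Nat.choose_eq_zero_of_lt (show 2 * n - k - 1 < n - 1 by omega)]; simp

open Nat in
/-- The relation on the boundary `k = n + 1`, where only two terms are nonzero. -/
lemma wz_boundary (n : ℕ) : wzF2 n n = wzG2 (n + 1) (n + 1) := by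
  have hF := wzF2_closed 0 n
  have hG := wzG2_closed 0 n
  simp only [add_zero, mul_zero] at hF hG
  rw [hF, hG]
  have f (a : ℕ) : (a ! : ℚ) ≠ 0 := by exact_mod_cast a.factorial_ne_zero
  have := f n; have := f (2 * n); have := f (3 * n); have := f (6 * n)
  simp only [Nat.factorial_succ]
  push_cast
  field_simp
  ring

open Nat in
/-- The relation for `k = j + 1 ≤ n = j + 1 + m`, where every term is a factorial quotient. -/
lemma wz_interior (m j : ℕ) :
    wzF2 (j + 1 + m) j - wzF2 (j + 1 + m) (j + 1) =
      wzG2 (j + 1 + m + 1) (j + 1) - wzG2 (j + 1 + m) (j + 1) := by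
  have hF := wzF2_closed (m + 1) j
  rw [show j + (m + 1) = j + 1 + m by ring] at hF
  have hG := wzG2_closed (m + 1) j
  rw [show j + 1 + (m + 1) = j + 1 + m + 1 by ring] at hG
  rw [hF, hG, wzF2_closed, wzG2_closed]
  have f (a : ℕ) : (a ! : ℚ) ≠ 0 := by exact_mod_cast a.factorial_ne_zero
  -- Every factorial is normalised to a base factorial times explicit linear factors.
  rw [show j + 1 + m = j + m + 1 by ring, show j + (m + 1) = j + m + 1 by ring,
    show 2 * j + 2 * (m + 1) = 2 * j + 2 * m + 2 by ring,
    show 6 * j + 4 * (m + 1) = 6 * j + 4 * m + 4 by ring,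
    show 3 * j + 2 * (m + 1) = 3 * j + 2 * m + 2 by ring,
    show 2 * (j + 1) + 2 * m = 2 * j + 2 * m + 2 by ring,
    show 6 * (j + 1) + 4 * m = 6 * j + 4 * m + 6 by ring,
    show 3 * (j + 1) + 2 * m = 3 * j + 2 * m + 3 by ring,
    show 2 * (j + 1) = 2 * j + 2 by ring,
    show 4 * j + 5 * (m + 1) = 4 * j + 5 * m + 5 by ring,
    show 4 * (j + 1) + 5 * m = 4 * j + 5 * m + 4 by ring]
  have := f j; have := f m; have := f (j + m); have := f (2 * j); have := f (2 * j + 2 * m)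
  have := f (3 * j + 2 * m); have := f (6 * j + 4 * m)
  simp only [Nat.factorial_succ, pow_succ (4 : ℚ), pow_succ (-1 : ℚ)]
  push_cast
  generalize (-1 : ℚ) ^ m = s
  field_simp
  ring

/-- The WZ relation `F(n,k-1) - F(n,k) = G(n+1,k) - G(n,k)` for all `n ≥ 0` and `k ≥ 1`. -/
theorem wz_relation_20k3 (n k : ℕ) (hk : 1 ≤ k) :
    wzF2 n (k - 1) - wzF2 n k = wzG2 (n + 1) k - wzG2 n k := by
  obtain ⟨j, rfl⟩ : ∃ j, k = j + 1 := ⟨k - 1, by omega⟩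
  rw [Nat.add_sub_cancel]
  rcases lt_trichotomy j n with h | rfl | h
  · obtain ⟨m, rfl⟩ := Nat.exists_eq_add_of_le (Nat.succ_le_of_lt h)
    exact wz_interior m j
  · rw [wzF2_eq_zero (Nat.lt_succ_self j), wzG2_eq_zero (Nat.lt_succ_self j), wz_boundary]
  · rw [wzF2_eq_zero h, wzF2_eq_zero (show n < j + 1 by omega),
      wzG2_eq_zero (show n + 1 < j + 1 by omega), wzG2_eq_zero (show n < j + 1 by omega)]
end

section
/- Let N be a positive integer. Then ∑_{n=0}^{N} (20n+3)/(-2^10)^n · C(2n,n)^2·C(4n,2n) − (18N+3)/2^(8N) · C(6N,3N)·C(3N,N) = (N+1)·C(2N+1, N)·C(4N+2, N) · ∑_{k=1}^{N} (-1)^(N+k+1)·C(4N+2k+2, 2k)·C(3N+2, N−k+1)/(4^(5N+1−k)·C(2k,k)), as an identity of rational numbers. -/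
/-!
The identity comes from a WZ pair. With `x^{(k)}` the falling factorial, put
`F(n,k) = (-4)^k/(-1024)^n · (20n-2k+3) · (2n)! (4n+2k)! k!² n^{(k)} / (n!⁴ (2k)!² (2n+k)!)`,
which is the left-hand summand at `k = 0`, vanishes for `n < k`, and equals
`(18N+3)/2^(8N)·C(6N,3N)·C(3N,N)` at `n = k = N`. There is a companion `G` with `G(0,k) = 0` and
`F(n,k) - F(n,k+1) = G(n+1,k) - G(n,k)` (`wzF_sub_wzF`). Summing over `0 ≤ n ≤ N` and `0 ≤ k < N`
telescopes in both directions: the left side becomes `∑ F(n,0) - F(N,N)`, the right side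
`∑_{k<N} G(N+1,k)`, and `G(N+1,k)` is the right-hand summand of index `k + 1`.
-/

open Nat in
/-- The first member `F(n,k)` of the WZ pair. The customary factor `1/(n-k)!` is written as
`n.descFactorial k / n!`, which is zero for `n < k`. -/
def wzF (n k : ℕ) : ℚ :=
  (-4) ^ k / (-1024) ^ n * (20 * n - 2 * k + 3) *
    ((2 * n)! * (4 * n + 2 * k)! * (k ! : ℚ) ^ 2 * n.descFactorial k) /
    ((n ! : ℚ) ^ 4 * ((2 * k)! : ℚ) ^ 2 * (2 * n + k)!)

open Nat in
/-- The second member of the WZ pair, with `k` shifted by one from the usual indexing, so that no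
subtraction occurs in the factorials. -/
def wzG (n k : ℕ) : ℚ :=
  (-4) ^ (k + 1) / (-1024) ^ n * 128 * (n : ℚ) ^ 2 *
    ((2 * n)! * (4 * n + 2 * k)! * ((k + 1)! : ℚ) ^ 2 * n.descFactorial (k + 1)) /
    ((n ! : ℚ) ^ 4 * ((2 * (k + 1))! : ℚ) ^ 2 * (2 * n + k)!)

/-- Over `ℚ` the recursion of the falling factorial needs no hypothesis `k ≤ n`: for `n < k` both
sides vanish. -/
lemma cast_descFactorial_succ_rat (n k : ℕ) :
    (n.descFactorial (k + 1) : ℚ) = ((n : ℚ) - k) * n.descFactorial k := by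
  rcases le_or_gt k n with h | h
  · rw [Nat.descFactorial_succ, Nat.cast_mul, Nat.cast_sub h]
  · rw [Nat.descFactorial_eq_zero_iff_lt.mpr h, Nat.descFactorial_eq_zero_iff_lt.mpr (by omega)]
    simp

open Nat in
lemma wzF_sub_wzF (n k : ℕ) : wzF n k - wzF n (k + 1) = wzG (n + 1) k - wzG n k := by
  have hd : ((n + 1).descFactorial (k + 1) : ℚ) = (n + 1) * n.descFactorial k := by
    rw [Nat.succ_descFactorial_succ]; push_cast; ring
  unfold wzF wzG
  rw [hd, cast_descFactorial_succ_rat n k]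
  rw [show 2 * (n + 1) = 2 * n + 1 + 1 by ring, show 2 * (k + 1) = 2 * k + 1 + 1 by ring,
    show 4 * n + (2 * k + 1 + 1) = 4 * n + 2 * k + 1 + 1 by ring,
    show 4 * (n + 1) + 2 * k = 4 * n + 2 * k + 1 + 1 + 1 + 1 by ring,
    show 2 * n + 1 + 1 + k = 2 * n + k + 1 + 1 by ring,
    show 2 * n + (k + 1) = 2 * n + k + 1 by ring]
  simp only [Nat.factorial_succ]
  push_cast
  have h1 := Nat.cast_ne_zero (R := ℚ).mpr (Nat.factorial_ne_zero n)
  have h2 := Nat.cast_ne_zero (R := ℚ).mpr (Nat.factorial_ne_zero (2 * k))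
  have h3 := Nat.cast_ne_zero (R := ℚ).mpr (Nat.factorial_ne_zero (2 * n + k))
  have h4 : (n : ℚ) + 1 ≠ 0 := by positivity
  have h5 : 2 * (k : ℚ) + 1 ≠ 0 := by positivity
  have h6 : 2 * (k : ℚ) + 1 + 1 ≠ 0 := by positivity
  have h7 : 2 * (n : ℚ) + k + 1 ≠ 0 := by positivity
  have h8 : 2 * (n : ℚ) + k + 1 + 1 ≠ 0 := by positivity
  have h9 : (-1024 : ℚ) ^ n ≠ 0 := by positivity
  generalize (n.descFactorial k : ℚ) = d
  generalize ((4 * n + 2 * k)! : ℚ) = a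
  generalize ((2 * n)! : ℚ) = b
  generalize (n ! : ℚ) = c at *
  generalize ((2 * k)! : ℚ) = e at *
  generalize ((2 * n + k)! : ℚ) = f at *
  generalize (k ! : ℚ) = g
  simp only [pow_succ (-1024 : ℚ) n, pow_succ (-4 : ℚ) k]
  generalize (-1024 : ℚ) ^ n = p at *
  generalize (-4 : ℚ) ^ k = q
  generalize (n : ℚ) = x at *
  generalize (k : ℚ) = y at *
  -- naming the linear denominators lets `field_simp` clear them as atoms
  generalize hu : 2 * x + y + 1 = u at *
  generalize hw : u + 1 = w at *
  generalize hv : 2 * y + 1 = v at *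
  generalize hz : v + 1 = z at *
  field_simp
  subst hz hv hw hu
  ring

open Nat in
lemma wzF_zero (n : ℕ) :
    wzF n 0 = (20 * (n : ℚ) + 3) / (-2 ^ 10 : ℚ) ^ n * (Nat.choose (2 * n) n : ℚ) ^ 2 *
      (Nat.choose (4 * n) (2 * n) : ℚ) := by
  rw [Nat.cast_choose ℚ (show n ≤ 2 * n by omega),
    Nat.cast_choose ℚ (show 2 * n ≤ 4 * n by omega),
    show 2 * n - n = n by omega, show 4 * n - 2 * n = 2 * n by omega]
  have h1 := Nat.cast_ne_zero (R := ℚ).mpr (Nat.factorial_ne_zero n)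
  have h2 := Nat.cast_ne_zero (R := ℚ).mpr (Nat.factorial_ne_zero (2 * n))
  have h9 : (-1024 : ℚ) ^ n ≠ 0 := by positivity
  norm_num [wzF]
  field_simp

open Nat in
lemma wzF_self (N : ℕ) :
    wzF N N = (18 * (N : ℚ) + 3) / (2 : ℚ) ^ (8 * N) * (Nat.choose (6 * N) (3 * N) : ℚ) *
      (Nat.choose (3 * N) N : ℚ) := by
  rw [Nat.cast_choose ℚ (show 3 * N ≤ 6 * N by omega),
    Nat.cast_choose ℚ (show N ≤ 3 * N by omega),
    show 6 * N - 3 * N = 3 * N by omega, show 3 * N - N = 2 * N by omega]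
  have h1 := Nat.cast_ne_zero (R := ℚ).mpr (Nat.factorial_ne_zero N)
  have h2 := Nat.cast_ne_zero (R := ℚ).mpr (Nat.factorial_ne_zero (2 * N))
  have h3 := Nat.cast_ne_zero (R := ℚ).mpr (Nat.factorial_ne_zero (3 * N))
  have hp : (-4 : ℚ) ^ N / (-1024) ^ N = 1 / 2 ^ (8 * N) := by
    rw [← div_pow, pow_mul, ← one_div_pow]; norm_num
  unfold wzF
  rw [hp, Nat.descFactorial_self, show 4 * N + 2 * N = 6 * N by ring,
    show 2 * N + N = 3 * N by ring]
  field_simp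
  ring

lemma wzF_eq_zero {n k : ℕ} (h : n < k) : wzF n k = 0 := by
  simp [wzF, Nat.descFactorial_eq_zero_iff_lt.mpr h]

lemma wzG_zero (k : ℕ) : wzG 0 k = 0 := by
  simp [wzG]

open Nat in
/-- `G(N+1,k)` is the right-hand summand of index `k + 1`; here `N = k + 1 + m`. -/
lemma wzG_succ (k m N : ℕ) (hN : N = k + 1 + m) :
    wzG (N + 1) k =
      ((N : ℚ) + 1) * (Nat.choose (2 * N + 1) N : ℚ) * (Nat.choose (4 * N + 2) N : ℚ) *
        ((-1 : ℚ) ^ (N + (k + 1) + 1) *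
            (Nat.choose (4 * N + 2 * (k + 1) + 2) (2 * (k + 1)) : ℚ) *
            (Nat.choose (3 * N + 2) (N - (k + 1) + 1) : ℚ) /
          ((4 : ℚ) ^ (5 * N + 1 - (k + 1)) * (Nat.choose (2 * (k + 1)) (k + 1) : ℚ))) := by
  have hd : ((N + 1).descFactorial (k + 1) : ℚ) = (N + 1)! / (m + 1)! := by
    have h := Nat.factorial_mul_descFactorial (show k + 1 ≤ N + 1 by omega)
    rw [show N + 1 - (k + 1) = m + 1 by omega] at h
    rw [eq_div_iff (Nat.cast_ne_zero.mpr (Nat.factorial_ne_zero _)), mul_comm]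
    exact_mod_cast h
  -- the powers of `-4` and `-1024` split into the sign and the power of `4`
  have hp : (-4 : ℚ) ^ (k + 1) / (-1024) ^ (N + 1) * 256 =
      (-1) ^ (N + (k + 1) + 1) / 4 ^ (5 * N + 1 - (k + 1)) := by
    rw [show N + (k + 1) + 1 = (k + 1) + (N + 1) by ring, pow_add, div_mul_eq_mul_div,
      div_eq_div_iff (by positivity) (by positivity)]
    have e : (4 : ℚ) ^ (k + 1) * 4 ^ (5 * N + 1 - (k + 1)) * 256 = 1024 ^ (N + 1) := by
      rw [← pow_add, show k + 1 + (5 * N + 1 - (k + 1)) = 5 * N + 1 by omega,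
        show (1024 : ℚ) = 4 ^ 5 by norm_num, ← pow_mul]
      ring
    have s : (-1 : ℚ) ^ (N + 1) * (-1) ^ (N + 1) = 1 := by
      rw [← mul_pow]; norm_num
    rw [neg_pow (4 : ℚ), neg_pow (1024 : ℚ), ← e]
    linear_combination (-(-1) ^ (k + 1) * (4 : ℚ) ^ (k + 1) * 4 ^ (5 * N + 1 - (k + 1)) * 256) * s
  rw [Nat.cast_choose ℚ (show N ≤ 2 * N + 1 by omega),
    Nat.cast_choose ℚ (show N ≤ 4 * N + 2 by omega),
    Nat.cast_choose ℚ (show 2 * (k + 1) ≤ 4 * N + 2 * (k + 1) + 2 by omega),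
    Nat.cast_choose ℚ (show N - (k + 1) + 1 ≤ 3 * N + 2 by omega),
    Nat.cast_choose ℚ (show k + 1 ≤ 2 * (k + 1) by omega),
    show 2 * N + 1 - N = N + 1 by omega,
    show 4 * N + 2 - N = 3 * N + 2 by omega,
    show 4 * N + 2 * (k + 1) + 2 - 2 * (k + 1) = 4 * N + 2 by omega,
    show 3 * N + 2 - (N - (k + 1) + 1) = 2 * (N + 1) + k by omega,
    show N - (k + 1) + 1 = m + 1 by omega,
    show 2 * (k + 1) - (k + 1) = k + 1 by omega]
  rw [show ∀ a b c d e : ℚ, a * (b * c * d / (e * ((2 * (k + 1))! / ((k + 1)! * (k + 1)!)))) =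
    (b / e) * (a * c * d / ((2 * (k + 1))! / ((k + 1)! * (k + 1)!))) by
      intro a b c d e; field_simp, ← hp]
  unfold wzG
  rw [hd, show 4 * (N + 1) + 2 * k = 4 * N + 2 * (k + 1) + 2 by ring,
    show (2 * (N + 1))! = (2 * N + 2) * (2 * N + 1)! from Nat.factorial_succ (2 * N + 1),
    Nat.factorial_succ N]
  have h1 := Nat.cast_ne_zero (R := ℚ).mpr (Nat.factorial_ne_zero N)
  have h2 := Nat.cast_ne_zero (R := ℚ).mpr (Nat.factorial_ne_zero (2 * (k + 1)))
  have h3 := Nat.cast_ne_zero (R := ℚ).mpr (Nat.factorial_ne_zero (2 * (N + 1) + k))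
  have h4 := Nat.cast_ne_zero (R := ℚ).mpr (Nat.factorial_ne_zero (m + 1))
  have h5 := Nat.cast_ne_zero (R := ℚ).mpr (Nat.factorial_ne_zero (3 * N + 2))
  have h6 := Nat.cast_ne_zero (R := ℚ).mpr (Nat.factorial_ne_zero (4 * N + 2))
  have h7 := Nat.cast_ne_zero (R := ℚ).mpr (Nat.factorial_ne_zero (k + 1))
  have h8 : (N : ℚ) + 1 ≠ 0 := by positivity
  generalize (-4 : ℚ) ^ (k + 1) / (-1024) ^ (N + 1) = p
  push_cast
  field_simp
  ring

/-- The telescoped WZ identity (3.7): for a positive integer `N`,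
`∑_{n=0}^{N} (20n+3)/(-2^10)^n·C(2n,n)^2·C(4n,2n) - (18N+3)/2^(8N)·C(6N,3N)·C(3N,N)
 = (N+1)·C(2N+1,N)·C(4N+2,N)·
     ∑_{k=1}^{N} (-1)^(N+k+1)·C(4N+2k+2,2k)·C(3N+2,N-k+1)/(4^(5N+1-k)·C(2k,k))`. -/
theorem wz_identity_20k3 (N : ℕ) (hN : 1 ≤ N) :
    (∑ n ∈ Finset.range (N + 1),
        (20 * (n : ℚ) + 3) / (-2 ^ 10 : ℚ) ^ n * (Nat.choose (2 * n) n : ℚ) ^ 2 *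
          (Nat.choose (4 * n) (2 * n) : ℚ)) -
      (18 * (N : ℚ) + 3) / (2 : ℚ) ^ (8 * N) * (Nat.choose (6 * N) (3 * N) : ℚ) *
        (Nat.choose (3 * N) N : ℚ) =
    ((N : ℚ) + 1) * (Nat.choose (2 * N + 1) N : ℚ) * (Nat.choose (4 * N + 2) N : ℚ) *
      ∑ k ∈ Finset.Icc 1 N,
        (-1 : ℚ) ^ (N + k + 1) * (Nat.choose (4 * N + 2 * k + 2) (2 * k) : ℚ) *
            (Nat.choose (3 * N + 2) (N - k + 1) : ℚ) /
          ((4 : ℚ) ^ (5 * N + 1 - k) * (Nat.choose (2 * k) k : ℚ)) := by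
  have hrow (k : ℕ) : ∑ n ∈ Finset.range (N + 1), wzF n k -
      ∑ n ∈ Finset.range (N + 1), wzF n (k + 1) = wzG (N + 1) k := by
    rw [← Finset.sum_sub_distrib, Finset.sum_congr rfl fun n _ => wzF_sub_wzF n k,
      Finset.sum_range_sub (fun n => wzG n k), wzG_zero, sub_zero]
  have hdiag : ∑ n ∈ Finset.range (N + 1), wzF n N = wzF N N := by
    rw [Finset.sum_range_succ, Finset.sum_eq_zero, zero_add]
    exact fun n hn => wzF_eq_zero (Finset.mem_range.mp hn)
  rw [← wzF_self, ← hdiag, ← Finset.sum_congr rfl fun n _ => wzF_zero n,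
    ← Finset.sum_range_sub' (fun k => ∑ n ∈ Finset.range (N + 1), wzF n k),
    Finset.sum_congr rfl fun k _ => hrow k, ← Finset.Ico_add_one_right_eq_Icc,
    Finset.sum_Ico_eq_sum_range, Nat.add_sub_cancel, Finset.mul_sum]
  refine Finset.sum_congr rfl fun k hk => ?_
  obtain ⟨m, hm⟩ := Nat.exists_eq_add_of_le (Finset.mem_range.mp hk)
  rw [add_comm 1 k]
  exact wzG_succ k m N hm
end

section
/- Let p be an odd prime and set m = (p-1)/2. Then C(4m+2, m) = C(2p, (p-1)/2) ≡ p·4^p·(-1)^((p-1)/2)·(1 − 3p + 2p·q_p(2)) (mod p^3), as a congruence of rational numbers, where q_p(2) = (2^(p−1) − 1)/p is the Fermat quotient. -/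
/-!
Write `p = 2m + 1`, `2^(p-1) = 1 + p q`, and `P(x) = ∏_{k=1}^m (x - k)`, so that
`P(x) ≡ P(0) + B x (mod x²)` with `P(0) = (-1)^m m!`.
Splitting the factors of `(2m)!` by parity gives `P(p) = 2^m ∏_{k=1}^m (p - 2k)`, i.e.
`P(p) = 2^(p-1) P(p/2)`. Comparing the linear expansions of both sides modulo `p²` yields
`B p ≡ 2 p q P(0)`. Hence `m! C(2p-1, m) = P(2p) ≡ P(0) (1 + 4pq) (mod p²)`, and `m!` cancels:
`C(2p-1, m) ≡ (-1)^m (1 + 4pq) (mod p²)`.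
Finally `(2p - m) C(2p, m) = 2p C(2p-1, m)`, which after doubling reads
`(1 + 3p) C(2p, m) = 4p C(2p-1, m)`; the claimed right-hand side satisfies the same relation
modulo `p³`, and `1 + 3p` is prime to `p`. No harmonic sums are needed.
-/

/-- First-order expansion of `∏ (x - k)` together with that of `∏ (x - 2k) = 2^m ∏ (x/2 - k)`,
sharing the same linear coefficient `B`; the second is doubled to avoid halves. -/
lemma prod_linear_expansion (x : ℤ) (m : ℕ) : ∃ B : ℤ, ∀ t : ℤ,
    x ^ 2 ∣ (∏ k ∈ Finset.range m, (t * x - (k + 1))) -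
      ((-1) ^ m * (m.factorial : ℤ) + B * (t * x)) ∧
    x ^ 2 ∣ 2 * (∏ k ∈ Finset.range m, (x - 2 * (k + 1))) -
      2 ^ m * (2 * ((-1) ^ m * (m.factorial : ℤ)) + B * x) := by
  induction m with
  | zero => exact ⟨0, fun t => by simp⟩
  | succ m ih =>
    obtain ⟨B, hB⟩ := ih
    refine ⟨(-1) ^ m * (m.factorial : ℤ) - (m + 1) * B, fun t => ?_⟩
    obtain ⟨⟨c, hc⟩, ⟨d, hd⟩⟩ := hB t
    rw [Finset.prod_range_succ, Finset.prod_range_succ, Nat.factorial_succ]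
    push_cast
    refine ⟨⟨c * (t * x - (m + 1)) + B * t ^ 2, ?_⟩,
      ⟨d * (x - 2 * (m + 1)) + 2 ^ m * B, ?_⟩⟩
    · linear_combination (t * x - (m + 1)) * hc
    · linear_combination (x - 2 * (m + 1)) * hd

lemma prod_eq_factorial_mul_choose (n m : ℕ) (h : m ≤ n) :
    (∏ k ∈ Finset.range m, (((n + 1 : ℕ) : ℤ) - (k + 1))) =
      (m.factorial : ℤ) * (n.choose m : ℤ) := by
  have : ((n.descFactorial m : ℕ) : ℤ) = (m.factorial : ℤ) * (n.choose m : ℤ) := by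
    rw [Nat.descFactorial_eq_factorial_mul_choose]; push_cast; rfl
  rw [← this, Nat.descFactorial_eq_prod_range]
  push_cast
  refine Finset.prod_congr rfl fun k hk => ?_
  have := Finset.mem_range.1 hk
  rw [Nat.cast_sub (by omega)]
  ring

lemma factorial_mul_centralBinom_eq (m : ℕ) :
    (m.factorial : ℤ) * (m.centralBinom : ℤ) =
      2 ^ m * ∏ k ∈ Finset.range m, (2 * (k : ℤ) + 1) := by
  induction m with
  | zero => simp
  | succ m ih =>
    have h : ((m : ℤ) + 1) * ((m + 1).centralBinom : ℤ) =
        2 * (2 * m + 1) * (m.centralBinom : ℤ) := by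
      exact_mod_cast Nat.succ_mul_centralBinom_succ m
    rw [Finset.prod_range_succ, Nat.factorial_succ]
    push_cast
    linear_combination (m.factorial : ℤ) * h + 2 * (2 * (m : ℤ) + 1) * ih

/-- The identity `P(p) = 2^m ∏ (p - 2k)` for `p = 2m + 1`. -/
lemma prod_split_parity (m : ℕ) :
    (∏ k ∈ Finset.range m, ((2 * m + 1 : ℤ) - (k + 1))) =
      2 ^ m * ∏ k ∈ Finset.range m, ((2 * m + 1 : ℤ) - 2 * (k + 1)) := by
  have h := prod_eq_factorial_mul_choose (2 * m) m (by omega)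
  rw [← Nat.centralBinom_eq_two_mul_choose, factorial_mul_centralBinom_eq,
    ← Finset.prod_range_reflect (fun k : ℕ => 2 * (k : ℤ) + 1)] at h
  push_cast at h
  rw [h]
  congr 1
  refine Finset.prod_congr rfl fun k hk => ?_
  have := Finset.mem_range.1 hk
  rw [show m - 1 - k = m - (k + 1) by omega, Nat.cast_sub (by omega)]
  push_cast
  ring

/-- `C(2p-1, m) ≡ (-1)^m (1 + 4 p q) (mod p²)` for `p = 2m + 1`. -/
lemma choose_two_p_sub_one_cong (m : ℕ) (hp : (2 * m + 1).Prime) (q : ℤ)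
    (hq : (2 : ℤ) ^ (2 * m) = 1 + (2 * m + 1) * q) :
    (2 * m + 1 : ℤ) ^ 2 ∣ ((4 * m + 1).choose m : ℤ) -
      (-1) ^ m * (1 + 4 * (2 * m + 1) * q) := by
  obtain ⟨B, hB⟩ := prod_linear_expansion (2 * m + 1) m
  obtain ⟨⟨a, ha⟩, ⟨b, hb⟩⟩ := hB 1
  obtain ⟨⟨c, hc⟩, -⟩ := hB 2
  have h1 := prod_split_parity m
  have h2 := prod_eq_factorial_mul_choose (4 * m + 1) m (by omega)
  have e2 : (∏ k ∈ Finset.range m, (2 * (2 * m + 1 : ℤ) - (k + 1))) =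
      (m.factorial : ℤ) * ((4 * m + 1).choose m : ℤ) := by
    rw [← h2]
    refine Finset.prod_congr rfl fun k _ => ?_
    push_cast
    ring
  rw [e2] at hc
  simp only [one_mul] at ha
  rw [h1] at ha
  have hpow : (2 : ℤ) ^ m * 2 ^ m = 1 + (2 * m + 1) * q := by rw [← hq]; ring
  have hcop : IsCoprime ((2 * m + 1 : ℤ) ^ 2) (m.factorial : ℤ) := by
    apply IsCoprime.pow_left
    have h : Nat.Coprime (2 * m + 1) m.factorial :=
      (Nat.Prime.coprime_iff_not_dvd hp).2 fun h => by
        have := (Nat.Prime.dvd_factorial hp).1 h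
        omega
    exact_mod_cast Nat.isCoprime_iff_coprime.2 h
  refine hcop.dvd_of_dvd_mul_left ?_
  -- in the witness, `2^m b - 2a + q B` is the cofactor of `p²` in `B p - 2 p q P(0)`
  refine ⟨c + 2 * (2 ^ m * b - 2 * a + q * B), ?_⟩
  linear_combination hc + 2 * 2 ^ m * hb - 4 * ha +
    2 * (2 * ((-1) ^ m * (m.factorial : ℤ)) + B * (2 * m + 1)) * hpow

/-- For an odd prime `p` and `m = (p-1)/2`, one has `C(4m+2, m) = C(2p, (p-1)/2)`, and
`C(2p, (p-1)/2) ≡ p·4^p·(-1)^((p-1)/2)·(1 - 3p + 2p·q_p(2)) (mod p^3)`,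
where `q_p(2) = (2^(p-1)-1)/p` is the Fermat quotient. -/
theorem choose_two_p_half_cong (p m : ℕ) (hp : p.Prime) (hodd : Odd p)
    (hm : m = (p - 1) / 2) :
    Nat.choose (4 * m + 2) m = Nat.choose (2 * p) ((p - 1) / 2) ∧
    padicNorm p ((Nat.choose (2 * p) ((p - 1) / 2) : ℚ) -
      (p : ℚ) * (4 : ℚ) ^ p * (-1) ^ ((p - 1) / 2) *
        (1 - 3 * (p : ℚ) + 2 * (p : ℚ) * (((2 : ℚ) ^ (p - 1) - 1) / (p : ℚ)))) ≤
      (p : ℚ) ^ (-3 : ℤ) := by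
  rw [← hm]
  have hpm : p = 2 * m + 1 := by
    obtain ⟨r, hr⟩ := hodd
    omega
  clear hm hodd
  subst hpm
  have e : 2 * (2 * m + 1) = 4 * m + 2 := by ring
  rw [e]
  refine ⟨rfl, ?_⟩
  have := Fact.mk hp
  obtain ⟨q, hq⟩ : ((2 * m + 1 : ℕ) : ℤ) ∣ 2 ^ (2 * m) - 1 := by
    have hc : IsCoprime (2 : ℤ) ((2 * m + 1 : ℕ) : ℤ) := ⟨-m, 1, by push_cast; ring⟩
    have := (Int.ModEq.pow_card_sub_one_eq_one hp hc).symm.dvd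
    simpa using this
  push_cast at hq
  have hpow : (2 : ℤ) ^ (2 * m) = 1 + (2 * m + 1) * q := by linear_combination hq
  have h4 : (4 : ℤ) ^ (2 * m + 1) = 4 * (1 + (2 * m + 1) * q) ^ 2 := by
    rw [← hpow, pow_succ, show (4 : ℤ) = 2 ^ 2 by norm_num, ← pow_mul, ← pow_mul]
    ring
  obtain ⟨c, hc⟩ := choose_two_p_sub_one_cong m hp q hpow
  have hrec : ((4 * m + 2).choose m : ℤ) * (3 * m + 2) =
      (4 * m + 2) * ((4 * m + 1).choose m : ℤ) := by
    have h := Nat.choose_mul_succ_eq (4 * m + 1) m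
    rw [show 4 * m + 1 + 1 - m = 3 * m + 2 by omega] at h
    have hcast := congrArg (Nat.cast : ℕ → ℤ) h
    push_cast at hcast
    linear_combination -hcast
  have hdvd : (((2 * m + 1 : ℕ) ^ 3 : ℕ) : ℤ) ∣ ((4 * m + 2).choose m : ℤ) -
      (2 * m + 1) * 4 ^ (2 * m + 1) * (-1) ^ m *
        (1 - 3 * (2 * m + 1) + 2 * ((2 * m + 1) * q)) := by
    push_cast
    have hcop : IsCoprime ((2 * m + 1 : ℤ) ^ 3) (1 + 3 * (2 * m + 1)) :=
      IsCoprime.pow_left ⟨-3, 1, by ring⟩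
    refine hcop.dvd_of_dvd_mul_left ?_
    rw [h4]
    refine ⟨4 * c + 4 * (-1) ^ m * (-(5 * q ^ 2 + 2 * (2 * m + 1) * q ^ 3) -
      (6 * q - 9) * (1 + (2 * m + 1) * q) ^ 2), ?_⟩
    linear_combination 2 * hrec + 4 * (2 * m + 1) * hc
  have hq2 : ((2 : ℚ) ^ (2 * m) - 1) / ((2 * m + 1 : ℕ) : ℚ) = q := by
    rw [div_eq_iff (by positivity)]
    have := congrArg (Int.cast : ℤ → ℚ) hq
    push_cast at this ⊢
    linear_combination this
  have := (padicNorm.dvd_iff_norm_le (p := 2 * m + 1)).1 hdvd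
  rw [show 2 * m + 1 - 1 = 2 * m by omega, hq2]
  push_cast at this ⊢
  convert this using 3
  ring
end
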